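/- Let A be a C*-algebra and let P : A → A be a completely contractive linear idempotent (P ∘ P = P). For a, b, c in the range X := P(A), define {a,b,c} := P(a b* c). Then (X, {·,·,·}) satisfies the abstract TRO axioms: the operation is linear in the first and third variables and conjugate-linear in the second; {{x,y,z},u,v} = {x,{u,z,y},v} = {x,y,{z,u,v}} for all x,y,z,u,v ∈ X; ‖{x,y,z}‖ ≤ ‖x‖·‖y‖·‖z‖ for all x,y,z ∈ X; and ‖{x,x,x}‖ = ‖x‖³ for all x ∈ X. -/

import Mathlib

/-!
The whole statement follows from three identities: if `x, y, z` lie in the range `X` of `P`, then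
`P (x * star b * z)`, `P (b * star y * z)` and `P (x * star y * b)` all vanish for `b ∈ ker P`.
Each is proved by looking at vector fields tangent to the unit ball.

A homogeneous holomorphic field `q` of positive degree on `X` that satisfies
`‖w + ζ • q w‖ ≤ 1 + C * ‖ζ‖ ^ 2` for all `w` in the unit ball of `X` and all `ζ : ℂ` is zero
(`vanish_of_tangent`). This is a discrete form of Cartan's uniqueness theorem: `n = m ^ 2` Euler
steps of size `1 / m` keep the ball bounded, while the first-order dependence of the iterate on the
phase of the step grows like `m • q z`, against the Cauchy estimate.

* The field `b - z * star b * z`, which generates Möbius transformations, is tangent to the unit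
  ball of a C*-algebra (`moebius_bound`). Applying `P` when `P b = 0` shows that
  `z ↦ P (z * star b * z)` is tangent to the ball of `X`, so it vanishes (`middle_diag`).
  Using this for the amplification of `P` to `2 × 2` matrices polarizes it to
  `P (x * star b * z) = 0` (`middle_vanish`).
* For skew-adjoint `k`, the field `z ↦ k * z` is tangent (`skew_left_bound`). With
  `k = a * star y - y * star a` and `P a = 0`, the second term of `P (k * z)` is killed by the
  previous step, so the complex linear field `z ↦ P (a * star y * z)` is tangent and hence zero
  (`left_vanish`); right multiplications give `right_vanish`.

The cube identity needs only that `P` is contractive and fixes `x`. If `‖x‖ = 1` then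
`‖3 x - x x* x‖ ≤ 2`, the operator form of `t (3 - t ^ 2) ≤ 2` on `[0, 1]`. Applying `P` gives
`3 - ‖P (x x* x)‖ ≤ 2`.
-/

/-- A C*-norm on a (not necessarily unital) complex `*`-algebra: a submultiplicative
norm satisfying the C*-identity `N (x* x) = N x ^ 2`. On the matrix algebra `Mₙ(A)` over a
C*-algebra `A`, such a norm is unique and coincides with the canonical C*-norm. -/
def IsCStarNorm {B : Type*} [NonUnitalRing B] [StarRing B] [Module ℂ B] (N : B → ℝ) : Prop :=
  (∀ x, 0 ≤ N x) ∧ (∀ x, N x = 0 ↔ x = 0) ∧ (∀ x y, N (x + y) ≤ N x + N y) ∧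
    (∀ (c : ℂ) (x), N (c • x) = ‖c‖ * N x) ∧ (∀ x y, N (x * y) ≤ N x * N y) ∧
    (∀ x, N (star x * x) = N x * N x)

/-- A map `P : A → A` on a C*-algebra is completely contractive if all of its entrywise
amplifications to the matrix C*-algebras `Mₙ(A)` are contractive. -/
def CompletelyContractive {A : Type*} [NonUnitalCStarAlgebra A] (P : A → A) : Prop :=
  ∀ (n : ℕ) (N : Matrix (Fin n) (Fin n) A → ℝ), IsCStarNorm N →
    ∀ T : Matrix (Fin n) (Fin n) A, N (Matrix.of fun i j => P (T i j)) ≤ N T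

/-- A holomorphic field `q`, homogeneous of degree `d`, that preserves the subspace `M` and moves
points of the unit ball of `M` out of the ball only to second order, in all complex directions,
vanishes on `M`. The degree `d = 0` is not excluded: a constant field is never tangent unless it
is zero. -/
theorem vanish_of_tangent {E : Type*} [NormedAddCommGroup E] [NormedSpace ℂ E] (M : Submodule ℂ E)
    (q : E → E) (d : ℕ) (C : ℝ) (hC : 0 ≤ C) (hq : Differentiable ℂ q)
    (hM : ∀ w ∈ M, q w ∈ M) (hom : ∀ (r : ℂ) (w : E), q (r • w) = r ^ d • q w)
    (hb : ∀ w ∈ M, ‖w‖ ≤ 1 → ∀ ζ : ℂ, ‖w + ζ • q w‖ ≤ 1 + C * ‖ζ‖ ^ 2)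
    (z : E) (hz : z ∈ M) : q z = 0 := by
  wlog hz1 : ‖z‖ ≤ 1 generalizing z
  · have hz0 : 0 < ‖z‖ := by linarith
    have hne : ((‖z‖⁻¹ : ℝ) : ℂ) ≠ 0 := by exact_mod_cast (inv_pos.mpr hz0).ne'
    have h := this (((‖z‖⁻¹ : ℝ) : ℂ) • z) (M.smul_mem _ hz) (by
      rw [norm_smul, Complex.norm_real, norm_inv, norm_norm, inv_mul_cancel₀ hz0.ne'])
    rw [hom] at h
    exact (smul_eq_zero.mp h).resolve_left (pow_ne_zero _ hne)
  -- `l * h l` is the `n`-th iterate of `w ↦ r • (w + t • q w)` at `l • z` when `d = 2`; dividing by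
  -- `l` turns the second-order coefficient `c • q z` into a first derivative.
  have key : ∀ (t : ℝ), 0 < t → ∀ n : ℕ, ∃ (h : ℂ → E) (c : ℝ), Differentiable ℂ h ∧
      (∀ l, h l ∈ M) ∧ (∀ l : ℂ, ‖l‖ = 1 → ‖h l‖ ≤ 1) ∧
      h 0 = (((1 + C * t ^ 2)⁻¹ ^ n : ℝ) : ℂ) • z ∧ HasDerivAt h ((c : ℂ) • q z) 0 ∧
      n * t * ((1 + C * t ^ 2)⁻¹ ^ (d + 1)) ^ n ≤ c := by
    intro t ht n
    set r : ℝ := (1 + C * t ^ 2)⁻¹ with hr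
    have h1 : 1 ≤ 1 + C * t ^ 2 := by nlinarith [mul_nonneg hC (sq_nonneg t)]
    have hr0 : 0 < r := by positivity
    have hr1 : r ≤ 1 := inv_le_one_of_one_le₀ h1
    induction n with
    | zero => exact ⟨fun _ => z, 0, differentiable_const z, fun _ => hz, fun _ _ => hz1, by simp,
        by simpa using hasDerivAt_const (0 : ℂ) z, by simp⟩
    | succ n ih =>
      obtain ⟨h, c, hd, hm, hn, h0, hd0, hc⟩ := ih
      refine ⟨fun l => (r : ℂ) • (h l + ((t : ℂ) * l) • q (h l)), r * (c + t * (r ^ n) ^ d),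
        ?_, ?_, ?_, ?_, ?_, ?_⟩
      · have := hq.comp hd
        have h2 : Differentiable ℂ fun l : ℂ => (t : ℂ) * l := by fun_prop
        exact (hd.add (h2.smul this)).const_smul (r : ℂ)
      · intro l
        exact M.smul_mem _ (M.add_mem (hm l) (M.smul_mem _ (hM _ (hm l))))
      · intro l hl
        have := hb (h l) (hm l) (hn l hl) ((t : ℂ) * l)
        rw [norm_mul, hl, mul_one, Complex.norm_real, Real.norm_eq_abs, sq_abs] at this
        rw [norm_smul, Complex.norm_real, Real.norm_of_nonneg hr0.le]
        calc r * _ ≤ r * (1 + C * t ^ 2) := by gcongr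
          _ = 1 := inv_mul_cancel₀ (by positivity)
      · simp [h0, smul_smul, pow_succ']
      · have e : HasDerivAt (fun l : ℂ => (t : ℂ) * l) (t : ℂ) 0 := by
          simpa using (hasDerivAt_id (0 : ℂ)).const_mul (t : ℂ)
        have e2 := e.smul ((hq.comp hd) 0).hasDerivAt
        have e3 := (hd0.add e2).const_smul (r : ℂ)
        refine e3.congr_deriv ?_
        simp only [Function.comp, h0, hom, mul_zero, zero_smul, zero_add, smul_smul, ← add_smul]
        congr 1
        push_cast
        ring
      · have a1 : (r ^ (d + 1)) ^ (n + 1) ≤ r * (r ^ (d + 1)) ^ n := by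
          rw [pow_succ']
          gcongr
          exact pow_le_of_le_one hr0.le hr1 (by simp)
        have a2 : (r ^ (d + 1)) ^ n ≤ (r ^ n) ^ d := by
          rw [← pow_mul, ← pow_mul]
          exact pow_le_pow_of_le_one hr0.le hr1 (by nlinarith)
        push_cast
        calc (n + 1 : ℝ) * t * (r ^ (d + 1)) ^ (n + 1)
            ≤ (n + 1 : ℝ) * t * (r * (r ^ (d + 1)) ^ n) := by gcongr
          _ = r * (n * t * (r ^ (d + 1)) ^ n + t * (r ^ (d + 1)) ^ n) := by ring
          _ ≤ _ := by gcongr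
  -- With `n = m ^ 2` steps of size `t = 1 / m`, the contraction factors `r ^ n` stay bounded below
  -- while `n * t = m` is unbounded.
  have bound : ∀ m : ℕ, (m : ℝ) * ‖q z‖ ≤ Real.exp (C * (d + 1)) := by
    intro m
    rcases Nat.eq_zero_or_pos m with rfl | hm0
    · simp; positivity
    have hmp : (0 : ℝ) < m := by exact_mod_cast hm0
    obtain ⟨h, c, hd, -, hn, -, hd0, hc⟩ := key (m : ℝ)⁻¹ (by positivity) (m ^ 2)
    have hcau : ‖deriv h 0‖ ≤ 1 / 1 :=
      Complex.norm_deriv_le_of_forall_mem_sphere_norm_le one_pos hd.diffContOnCl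
        fun l hl => hn l (by simpa using hl)
    rw [hd0.deriv, norm_smul, Complex.norm_real, div_one] at hcau
    set r : ℝ := (1 + C * (m : ℝ)⁻¹ ^ 2)⁻¹ with hr
    have hr0 : 0 < r := by positivity
    have hexp : Real.exp (-(C * (d + 1))) ≤ (r ^ (d + 1)) ^ (m ^ 2) := by
      have : Real.exp (-(C * (m : ℝ)⁻¹ ^ 2)) ≤ r := by
        rw [Real.exp_neg, hr]
        gcongr
        linarith [Real.add_one_le_exp (C * (m : ℝ)⁻¹ ^ 2)]
      calc Real.exp (-(C * (d + 1)))
          = (Real.exp (-(C * (m : ℝ)⁻¹ ^ 2)) ^ (d + 1)) ^ (m ^ 2) := by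
            rw [← Real.exp_nat_mul, ← Real.exp_nat_mul]
            congr 1
            push_cast
            field_simp
        _ ≤ _ := by gcongr
    have hc2 : m * Real.exp (-(C * (d + 1))) ≤ c := by
      refine le_trans ?_ hc
      have : ((m ^ 2 : ℕ) : ℝ) * (m : ℝ)⁻¹ = m := by push_cast; field_simp
      rw [this]
      gcongr
    have h3 : m * Real.exp (-(C * (d + 1))) * ‖q z‖ ≤ 1 := by
      refine le_trans ?_ hcau
      gcongr
      exact hc2.trans (Real.le_norm_self c)
    rw [Real.exp_neg] at h3
    have := Real.exp_pos (C * (d + 1))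
    field_simp at h3
    linarith
  by_contra hne
  have hpos : 0 < ‖q z‖ := norm_pos_iff.mpr hne
  obtain ⟨m, hm⟩ := exists_nat_gt (Real.exp (C * (d + 1)) / ‖q z‖)
  rw [div_lt_iff₀ hpos] at hm
  linarith [bound m]

section estimates

open scoped ComplexOrder
open CStarAlgebra

/-- With `h = 1 - z* z ≥ 0`, `u = b* z` and `g = b - z b* z`, one has
`1 - (z + g)* (z + g) = (1 - u)* h (1 - u) - u* h u - g* g`: no first-order term survives beyond a
positive one. -/
theorem moebius_bound_unital {B : Type*} [CStarAlgebra B] (z b : B) (hz : ‖z‖ ≤ 1) :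
    ‖z + (b - z * star b * z)‖ ^ 2 ≤ 1 + 5 * ‖b‖ ^ 2 := by
  let _ := CStarAlgebra.spectralOrder B
  have := CStarAlgebra.spectralOrderedRing B
  set g := b - z * star b * z with hg
  set u := star b * z with hu
  have hh : 0 ≤ 1 - star z * z := by
    rw [sub_nonneg, ← CStarAlgebra.norm_le_one_iff_of_nonneg _ (star_mul_self_nonneg z),
      CStarRing.norm_star_mul_self]
    nlinarith [norm_nonneg z]
  have hu1 : ‖u‖ ≤ ‖b‖ := by
    calc ‖u‖ ≤ ‖star b‖ * ‖z‖ := norm_mul_le _ _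
      _ ≤ ‖b‖ * 1 := by rw [norm_star]; gcongr
      _ = ‖b‖ := mul_one _
  have hg1 : ‖g‖ ≤ 2 * ‖b‖ := by
    calc ‖g‖ ≤ ‖b‖ + ‖z * star b * z‖ := norm_sub_le _ _
      _ ≤ ‖b‖ + ‖z‖ * ‖u‖ := by rw [mul_assoc]; gcongr; exact norm_mul_le _ _
      _ ≤ ‖b‖ + 1 * ‖b‖ := by gcongr
      _ = 2 * ‖b‖ := by ring
  have e1 : 0 ≤ star (1 - u) * (1 - star z * z) * (1 - u) :=
    star_left_conjugate_nonneg hh _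
  have e2 : star u * (1 - star z * z) * u ≤ star u * u := by
    rw [← sub_nonneg]
    have : star u * u - star u * (1 - star z * z) * u = star (z * u) * (z * u) := by
      simp only [star_mul]; noncomm_ring
    rw [this]; exact star_mul_self_nonneg _
  have e3 : star (z + g) * (z + g) ≤ 1 + (star g * g + star u * u) := by
    have : 1 + (star g * g + star u * u) - star (z + g) * (z + g)
        = star (1 - u) * (1 - star z * z) * (1 - u)
          + (star u * u - star u * (1 - star z * z) * u) := by
      simp only [hg, hu, star_add, star_sub, star_mul, star_star, star_one]; noncomm_ring
    rw [← sub_nonneg, this]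
    exact add_nonneg e1 (sub_nonneg.mpr e2)
  have e4 : ‖star (z + g) * (z + g)‖ ≤ ‖1 + (star g * g + star u * u)‖ :=
    CStarAlgebra.norm_le_norm_of_nonneg_of_le (star_mul_self_nonneg _) e3
  have hone : ‖(1 : B)‖ ≤ 1 := by
    rcases subsingleton_or_nontrivial B with h | h
    · simp [Subsingleton.elim (1 : B) 0]
    · simp
  rw [CStarRing.norm_star_mul_self] at e4
  calc _ = ‖z + g‖ * ‖z + g‖ := by ring
    _ ≤ _ := e4
    _ ≤ ‖(1 : B)‖ + (‖star g * g‖ + ‖star u * u‖) :=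
      (norm_add_le _ _).trans (by gcongr; exact norm_add_le _ _)
    _ = ‖(1 : B)‖ + (‖g‖ * ‖g‖ + ‖u‖ * ‖u‖) := by
      rw [CStarRing.norm_star_mul_self, CStarRing.norm_star_mul_self]
    _ ≤ 1 + ((2 * ‖b‖) * (2 * ‖b‖) + ‖b‖ * ‖b‖) := by gcongr
    _ = _ := by ring

/-- With `h = 1 - x* x` and `w = 3 x - x x* x`, one has `4 - w* w = h (3 + h) h ≥ 0`. -/
theorem cube_bound_unital {B : Type*} [CStarAlgebra B] (x : B) (hx : ‖x‖ ≤ 1) :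
    ‖(3 : ℂ) • x - x * star x * x‖ ≤ 2 := by
  let _ := CStarAlgebra.spectralOrder B
  have := CStarAlgebra.spectralOrderedRing B
  set w := (3 : ℂ) • x - x * star x * x with hw
  have hh : 0 ≤ 1 - star x * x := by
    rw [sub_nonneg, ← CStarAlgebra.norm_le_one_iff_of_nonneg _ (star_mul_self_nonneg x),
      CStarRing.norm_star_mul_self]
    nlinarith [norm_nonneg x]
  have e1 : 0 ≤ star (1 - star x * x) * (3 + (1 - star x * x)) * (1 - star x * x) :=
    star_left_conjugate_nonneg (add_nonneg (by norm_num) hh) _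
  have e3 : star w * w ≤ 4 := by
    have h3 : (3 : ℂ) • x = 3 * x := by
      rw [Algebra.smul_def, map_ofNat]
    have : 4 - star w * w
        = star (1 - star x * x) * (3 + (1 - star x * x)) * (1 - star x * x) := by
      simp only [hw, h3, star_sub, star_mul, star_star, star_one, star_ofNat]
      noncomm_ring
      simp only [zsmul_one]
      push_cast
      abel
    rw [← sub_nonneg, this]
    exact e1
  have e4 := CStarAlgebra.norm_le_norm_of_nonneg_of_le (star_mul_self_nonneg _) e3
  have hone : ‖(4 : B)‖ ≤ 4 := by
    rcases subsingleton_or_nontrivial B with h | h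
    · simp [Subsingleton.elim (4 : B) 0]
    · have : (4 : B) = algebraMap ℂ B 4 := (map_ofNat _ 4).symm
      rw [this, norm_algebraMap']; simp
  rw [CStarRing.norm_star_mul_self] at e4
  nlinarith [norm_nonneg w]

end estimates

theorem moebius_bound {D : Type*} [NonUnitalCStarAlgebra D] (z b : D) (hz : ‖z‖ ≤ 1) :
    ‖z + (b - z * star b * z)‖ ≤ 1 + 5 * ‖b‖ ^ 2 := by
  have := moebius_bound_unital (z : Unitization ℂ D) (b : Unitization ℂ D)
    (by rwa [Unitization.norm_inr])
  rw [← Unitization.inr_star, ← Unitization.inr_mul, ← Unitization.inr_mul,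
    ← Unitization.inr_sub, ← Unitization.inr_add, Unitization.norm_inr, Unitization.norm_inr] at this
  nlinarith [norm_nonneg (z + (b - z * star b * z)), sq_nonneg ‖b‖, sq_nonneg (‖b‖ ^ 2)]

theorem cube_bound {D : Type*} [NonUnitalCStarAlgebra D] (x : D) (hx : ‖x‖ ≤ 1) :
    ‖(3 : ℂ) • x - x * star x * x‖ ≤ 2 := by
  have := cube_bound_unital (x : Unitization ℂ D) (by rwa [Unitization.norm_inr])
  rwa [← Unitization.inr_star, ← Unitization.inr_mul, ← Unitization.inr_mul,
    ← Unitization.inr_smul, ← Unitization.inr_sub, Unitization.norm_inr] at this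

/-- Left multiplication by a skew-adjoint element is tangent to the unit ball, because
`(z + k z)* (z + k z) = z* z + (k z)* (k z)`. -/
theorem skew_left_bound {D : Type*} [NonUnitalCStarAlgebra D] (z k : D) (hz : ‖z‖ ≤ 1)
    (hk : star k = -k) : ‖z + k * z‖ ≤ 1 + ‖k‖ ^ 2 := by
  have e : star (z + k * z) * (z + k * z) = star z * z + star (k * z) * (k * z) := by
    simp only [star_add, star_mul, hk]; noncomm_ring
  have h1 : ‖k * z‖ ≤ ‖k‖ := (norm_mul_le _ _).trans (mul_le_of_le_one_right (norm_nonneg _) hz)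
  have h2 : ‖z + k * z‖ * ‖z + k * z‖ ≤ ‖z‖ * ‖z‖ + ‖k * z‖ * ‖k * z‖ := by
    rw [← CStarRing.norm_star_mul_self, e, ← CStarRing.norm_star_mul_self,
      ← CStarRing.norm_star_mul_self]
    exact norm_add_le _ _
  have h3 : ‖z + k * z‖ * ‖z + k * z‖ ≤ 1 * 1 + ‖k‖ * ‖k‖ := h2.trans (by gcongr)
  nlinarith [norm_nonneg (z + k * z), sq_nonneg (‖k‖ ^ 2), sq_nonneg ‖k‖]

theorem skew_right_bound {D : Type*} [NonUnitalCStarAlgebra D] (z k : D) (hz : ‖z‖ ≤ 1)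
    (hk : star k = -k) : ‖z + z * k‖ ≤ 1 + ‖k‖ ^ 2 := by
  have := skew_left_bound (star z) (star k) (by rwa [norm_star]) (by rw [hk, star_neg, hk])
  rwa [← star_mul, ← star_add, norm_star, norm_star] at this

section contractive

variable {D : Type*} [NonUnitalCStarAlgebra D] (P : D →ₗ[ℂ] D)

/-- For a contractive idempotent, `P (z b* z) = 0` when `z` is in the range and `b` in the
kernel. -/
theorem middle_diag (hid : ∀ a, P (P a) = P a) (hP : ∀ a, ‖P a‖ ≤ ‖a‖)
    (b z : D) (hb : P b = 0) (hz : P z = z) : P (z * star b * z) = 0 := by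
  have hPc : Differentiable ℂ P :=
    (P.mkContinuous 1 fun a => by simpa using hP a).differentiable
  have hsq : Differentiable ℂ fun w : D => w * star b * w :=
    (ContinuousLinearMap.mul ℂ D).isBoundedBilinearMap.differentiable.comp
      (((ContinuousLinearMap.mul ℂ D).flip (star b)).differentiable.prodMk differentiable_id)
  refine vanish_of_tangent P.range (fun w => P (w * star b * w)) 2 (5 * ‖b‖ ^ 2) (by positivity)
    (hPc.comp hsq) (fun w _ => ⟨_, rfl⟩) ?_ ?_ z ⟨z, hz⟩
  · intro r w
    simp only [smul_mul_assoc, mul_smul_comm, map_smul, smul_smul, pow_two]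
  · rintro w ⟨a, rfl⟩ hw ζ
    set w := P a with hwa
    have hPw : P w = w := hid a
    -- The factor `-star ζ` becomes `ζ` in the conjugate-linear term `-w * star b * w`.
    have h1 := (hP _).trans (moebius_bound w (-(star ζ) • b) hw)
    have e : P (w + (-(star ζ) • b - w * star (-(star ζ) • b) * w)) =
        w + ζ • P (w * star b * w) := by
      simp [hPw, hb, smul_mul_assoc, mul_smul_comm]
    rw [e, norm_smul, norm_neg, norm_star] at h1
    linarith

variable (hid : ∀ a, P (P a) = P a) (hP : ∀ a, ‖P a‖ ≤ ‖a‖)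
  (mid : ∀ x b z, P x = x → P z = z → P b = 0 → P (x * star b * z) = 0)

include hid hP mid in
/-- The map `z ↦ P (a y* z)` agrees on the range of `P` with the tangent field
`z ↦ P ((a y* - y a*) z)`, because `P (y a* z) = 0`. -/
theorem left_vanish (a y z : D) (ha : P a = 0) (hy : P y = y) (hz : P z = z) :
    P (a * star y * z) = 0 := by
  have hPc : Differentiable ℂ P :=
    (P.mkContinuous 1 fun a => by simpa using hP a).differentiable
  refine vanish_of_tangent P.range (fun w => P (a * star y * w)) 1 ((2 * ‖a‖ * ‖y‖) ^ 2)
    (by positivity) (hPc.comp (ContinuousLinearMap.mul ℂ D (a * star y)).differentiable)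
    (fun w _ => ⟨_, rfl⟩) ?_ ?_ z ⟨z, hz⟩
  · intro r w
    simp only [mul_smul_comm, map_smul, pow_one]
  · rintro w ⟨c, rfl⟩ hw ζ
    set w := P c with hwc
    have hPw : P w = w := hid c
    set k := ζ • a * star y - y * star (ζ • a) with hk
    have hks : star k = -k := by simp [hk]
    have hkn : ‖k‖ ≤ ‖ζ‖ * (2 * ‖a‖ * ‖y‖) := by
      calc ‖k‖ ≤ ‖ζ • a * star y‖ + ‖y * star (ζ • a)‖ := norm_sub_le _ _
        _ ≤ ‖ζ • a‖ * ‖star y‖ + ‖y‖ * ‖star (ζ • a)‖ := by gcongr <;> exact norm_mul_le _ _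
        _ = _ := by rw [norm_star, norm_star, norm_smul]; ring
    have h1 := (hP _).trans (skew_left_bound w k hw hks)
    have e : P (w + k * w) = w + ζ • P (a * star y * w) := by
      have := mid y (ζ • a) w hy hPw (by rw [map_smul, ha, smul_zero])
      rw [hk, sub_mul, map_add, map_sub, this, sub_zero, hPw, smul_mul_assoc, smul_mul_assoc,
        map_smul]
    rw [e] at h1
    refine h1.trans ?_
    have : ‖k‖ ^ 2 ≤ (‖ζ‖ * (2 * ‖a‖ * ‖y‖)) ^ 2 := by gcongr
    linarith [mul_pow ‖ζ‖ (2 * ‖a‖ * ‖y‖) 2]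

include hid hP mid in
theorem right_vanish (a y z : D) (ha : P a = 0) (hy : P y = y) (hz : P z = z) :
    P (z * star y * a) = 0 := by
  have hPc : Differentiable ℂ P :=
    (P.mkContinuous 1 fun a => by simpa using hP a).differentiable
  have hr : Differentiable ℂ fun w : D => w * star y * a := by
    simp only [mul_assoc]
    exact ((ContinuousLinearMap.mul ℂ D).flip (star y * a)).differentiable
  refine vanish_of_tangent P.range (fun w => P (w * star y * a)) 1 ((2 * ‖a‖ * ‖y‖) ^ 2)
    (by positivity) (hPc.comp hr) (fun w _ => ⟨_, rfl⟩) ?_ ?_ z ⟨z, hz⟩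
  · intro r w
    simp only [smul_mul_assoc, map_smul, pow_one]
  · rintro w ⟨c, rfl⟩ hw ζ
    set w := P c with hwc
    have hPw : P w = w := hid c
    set k := star y * (ζ • a) - star (ζ • a) * y with hk
    have hks : star k = -k := by simp [hk]
    have hkn : ‖k‖ ≤ ‖ζ‖ * (2 * ‖a‖ * ‖y‖) := by
      calc ‖k‖ ≤ ‖star y * (ζ • a)‖ + ‖star (ζ • a) * y‖ := norm_sub_le _ _
        _ ≤ ‖star y‖ * ‖ζ • a‖ + ‖star (ζ • a)‖ * ‖y‖ := by gcongr <;> exact norm_mul_le _ _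
        _ = _ := by rw [norm_star, norm_star, norm_smul]; ring
    have h1 := (hP _).trans (skew_right_bound w k hw hks)
    have e : P (w + w * k) = w + ζ • P (w * star y * a) := by
      have := mid w (ζ • a) y hPw hy (by rw [map_smul, ha, smul_zero])
      rw [hk, mul_sub, map_add, map_sub, ← mul_assoc, ← mul_assoc, this, sub_zero, hPw,
        mul_smul_comm, map_smul]
    rw [e] at h1
    refine h1.trans ?_
    have : ‖k‖ ^ 2 ≤ (‖ζ‖ * (2 * ‖a‖ * ‖y‖)) ^ 2 := by gcongr
    linarith [mul_pow ‖ζ‖ (2 * ‖a‖ * ‖y‖) 2]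

include hP in
theorem cube_identity (x : D) (hx : P x = x) : ‖P (x * star x * x)‖ = ‖x‖ ^ 3 := by
  have hcube : ‖x * star x * x‖ ≤ ‖x‖ ^ 3 := by
    calc _ ≤ ‖x‖ * ‖star x‖ * ‖x‖ :=
          (norm_mul_le _ _).trans (by gcongr; exact norm_mul_le _ _)
      _ = _ := by rw [norm_star]; ring
  refine le_antisymm ((hP _).trans hcube) ?_
  rcases eq_or_ne x 0 with rfl | hx0
  · simp
  have hn : 0 < ‖x‖ := norm_pos_iff.mpr hx0
  set s : ℂ := ((‖x‖⁻¹ : ℝ) : ℂ) with hs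
  have hsn : ‖s‖ = ‖x‖⁻¹ := by rw [hs, Complex.norm_real, norm_inv, norm_norm]
  have hss : star s = s := by rw [hs]; exact Complex.conj_ofReal _
  have h1 := (hP _).trans (cube_bound (s • x) (by rw [norm_smul, hsn, inv_mul_cancel₀ hn.ne']))
  have e : P ((3 : ℂ) • s • x - s • x * star (s • x) * (s • x)) =
      (3 : ℂ) • s • x - (s ^ 3) • P (x * star x * x) := by
    rw [star_smul, hss]
    simp only [map_sub, map_smul, hx, smul_mul_assoc, mul_smul_comm, smul_smul]
    congr 2
    ring
  rw [e] at h1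
  have h2 := norm_sub_norm_le ((3 : ℂ) • s • x) ((s ^ 3) • P (x * star x * x))
  rw [norm_smul, norm_smul, norm_smul, norm_pow, hsn, inv_mul_cancel₀ hn.ne'] at h2
  have h3 : 1 ≤ ‖x‖⁻¹ ^ 3 * ‖P (x * star x * x)‖ := by
    have : ‖(3 : ℂ)‖ = 3 := by simp
    linarith
  rw [inv_pow, inv_mul_eq_div, le_div_iff₀ (by positivity)] at h3
  linarith

end contractive

/-- The operator norm of `CStarMatrix` is a C*-norm on matrices. The order on `A` is required by
Mathlib's norm on `CStarMatrix`. -/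
theorem isCStarNorm_cstarMatrix {A : Type*} [NonUnitalCStarAlgebra A] [PartialOrder A]
    [StarOrderedRing A] (n : ℕ) :
    IsCStarNorm (fun T : Matrix (Fin n) (Fin n) A => ‖CStarMatrix.ofMatrix T‖) :=
  ⟨fun _ => norm_nonneg _, fun _ => norm_eq_zero (E := CStarMatrix (Fin n) (Fin n) A),
    fun x y => norm_add_le (CStarMatrix.ofMatrix x) (CStarMatrix.ofMatrix y),
    fun c x => norm_smul c (CStarMatrix.ofMatrix x),
    fun x y => norm_mul_le (CStarMatrix.ofMatrix x) (CStarMatrix.ofMatrix y),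
    fun x => CStarRing.norm_star_mul_self (x := CStarMatrix.ofMatrix x)⟩

theorem isCStarNorm_one {A : Type*} [NonUnitalCStarAlgebra A] :
    IsCStarNorm (fun T : Matrix (Fin 1) (Fin 1) A => ‖T 0 0‖) := by
  refine ⟨fun _ => norm_nonneg _, fun x => ?_, fun x y => norm_add_le _ _,
    fun c x => norm_smul _ _, fun x y => ?_, fun x => ?_⟩
  · rw [norm_eq_zero]
    exact ⟨fun h => by ext i j; fin_cases i; fin_cases j; exact h, fun h => by simp [h]⟩
  · simpa [Matrix.mul_apply] using norm_mul_le (x 0 0) (y 0 0)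
  · simpa [Matrix.mul_apply, Matrix.star_apply] using CStarRing.norm_star_mul_self (x := x 0 0)

/-- Polarization of `middle_diag`: with `Z = diag (x, z)` and `B = b E₂₁`, the `(1, 2)` entry of
`Z B* Z` is `x b* z`. -/
theorem middle_vanish {A : Type*} [NonUnitalCStarAlgebra A] (P : A →ₗ[ℂ] A)
    (hid : ∀ a, P (P a) = P a) (hcc : CompletelyContractive (P : A → A))
    (x b z : A) (hx : P x = x) (hz : P z = z) (hb : P b = 0) : P (x * star b * z) = 0 := by
  let _ := CStarAlgebra.spectralOrder A
  have _ := CStarAlgebra.spectralOrderedRing A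
  let Z : CStarMatrix (Fin 2) (Fin 2) A := CStarMatrix.ofMatrix !![x, 0; 0, z]
  let B : CStarMatrix (Fin 2) (Fin 2) A := CStarMatrix.ofMatrix !![0, 0; b, 0]
  let P₂ : CStarMatrix (Fin 2) (Fin 2) A →ₗ[ℂ] CStarMatrix (Fin 2) (Fin 2) A :=
    CStarMatrix.mapₗ P
  have h := middle_diag P₂ (fun T => by ext i j; exact hid (T i j))
    (fun T => hcc 2 _ (isCStarNorm_cstarMatrix 2) T) B Z
    (by ext i j; fin_cases i <;> fin_cases j <;> simp [P₂, B, hb])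
    (by ext i j; fin_cases i <;> fin_cases j <;> simp [P₂, Z, hx, hz])
  have h01 := congrFun (congrFun h 0) 1
  simpa [P₂, Z, B, CStarMatrix.mul_apply, CStarMatrix.star_apply, Fin.sum_univ_two] using h01

/-- **Youngson's theorem**: the range of a completely contractive idempotent on a C*-algebra
is an abstract TRO under the ternary product `{a,b,c} = P (a b* c)`. -/
theorem range_of_completely_contractive_projection_is_TRO
    {A : Type*} [NonUnitalCStarAlgebra A]
    (P : A →ₗ[ℂ] A) (hidem : P ∘ₗ P = P) (hcc : CompletelyContractive (P : A → A))
    (X : Set A) (hX : X = Set.range P)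
    (t : A → A → A → A) (ht : ∀ a b c, t a b c = P (a * star b * c)) :
    -- the ternary product maps X³ into X
    (∀ a ∈ X, ∀ b ∈ X, ∀ c ∈ X, t a b c ∈ X) ∧
    -- linearity in the first variable
    (∀ a ∈ X, ∀ a' ∈ X, ∀ b ∈ X, ∀ c ∈ X, t (a + a') b c = t a b c + t a' b c) ∧
    (∀ (s : ℂ), ∀ a ∈ X, ∀ b ∈ X, ∀ c ∈ X, t (s • a) b c = s • t a b c) ∧
    -- conjugate-linearity in the second variable
    (∀ a ∈ X, ∀ b ∈ X, ∀ b' ∈ X, ∀ c ∈ X, t a (b + b') c = t a b c + t a b' c) ∧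
    (∀ (s : ℂ), ∀ a ∈ X, ∀ b ∈ X, ∀ c ∈ X, t a (s • b) c = (starRingEnd ℂ) s • t a b c) ∧
    -- linearity in the third variable
    (∀ a ∈ X, ∀ b ∈ X, ∀ c ∈ X, ∀ c' ∈ X, t a b (c + c') = t a b c + t a b c') ∧
    (∀ (s : ℂ), ∀ a ∈ X, ∀ b ∈ X, ∀ c ∈ X, t a b (s • c) = s • t a b c) ∧
    -- the associativity axioms
    (∀ x ∈ X, ∀ y ∈ X, ∀ z ∈ X, ∀ u ∈ X, ∀ v ∈ X,
      t (t x y z) u v = t x (t u z y) v ∧ t x (t u z y) v = t x y (t z u v)) ∧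
    -- the norm inequality
    (∀ x ∈ X, ∀ y ∈ X, ∀ z ∈ X, ‖t x y z‖ ≤ ‖x‖ * ‖y‖ * ‖z‖) ∧
    -- the cube identity
    (∀ x ∈ X, ‖t x x x‖ = ‖x‖ ^ 3) := by
  have hid : ∀ a, P (P a) = P a := fun a => LinearMap.congr_fun hidem a
  have hP : ∀ a, ‖P a‖ ≤ ‖a‖ := fun a => by
    simpa using hcc 1 _ isCStarNorm_one (Matrix.of fun _ _ => a)
  have mid := middle_vanish P hid hcc
  have hfix : ∀ x ∈ X, P x = x := by
    rw [hX]
    rintro _ ⟨a, rfl⟩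
    exact hid a
  have hker : ∀ a, P (a - P a) = 0 := fun a => by rw [map_sub, hid, sub_self]
  have L : ∀ a y z, P y = y → P z = z → P (P a * star y * z) = P (a * star y * z) := by
    intro a y z hy hz
    have := left_vanish P hid hP mid (a - P a) y z (hker a) hy hz
    rw [sub_mul, sub_mul, map_sub, sub_eq_zero] at this
    exact this.symm
  have R : ∀ a y z, P y = y → P z = z → P (z * star y * P a) = P (z * star y * a) := by
    intro a y z hy hz
    have := right_vanish P hid hP mid (a - P a) y z (hker a) hy hz
    rw [mul_sub, map_sub, sub_eq_zero] at this
    exact this.symm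
  have K : ∀ a x z, P x = x → P z = z → P (x * star (P a) * z) = P (x * star a * z) := by
    intro a x z hx hz
    have := mid x (a - P a) z hx hz (hker a)
    rw [star_sub, mul_sub, sub_mul, map_sub, sub_eq_zero] at this
    exact this.symm
  simp only [ht]
  refine ⟨?_, ?_, ?_, ?_, ?_, ?_, ?_, ?_, ?_, ?_⟩
  · intro a _ b _ c _
    rw [hX]
    exact ⟨_, rfl⟩
  · intro a _ a' _ b _ c _
    rw [add_mul, add_mul, map_add]
  · intro s a _ b _ c _
    rw [smul_mul_assoc, smul_mul_assoc, map_smul]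
  · intro a _ b _ b' _ c _
    rw [star_add, mul_add, add_mul, map_add]
  · intro s a _ b _ c _
    rw [star_smul, mul_smul_comm, smul_mul_assoc, map_smul, starRingEnd_apply]
  · intro a _ b _ c _ c' _
    rw [mul_add, map_add]
  · intro s a _ b _ c _
    rw [mul_smul_comm, map_smul]
  · intro x hx y hy z hz u hu v hv
    rw [L _ _ _ (hfix u hu) (hfix v hv), K _ _ _ (hfix x hx) (hfix v hv),
      R _ _ _ (hfix y hy) (hfix x hx)]
    simp only [star_mul, star_star, mul_assoc, and_self]
  · intro x _ y _ z _
    calc _ ≤ ‖x * star y * z‖ := hP _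
      _ ≤ ‖x‖ * ‖star y‖ * ‖z‖ := (norm_mul_le _ _).trans (by gcongr; exact norm_mul_le _ _)
      _ = _ := by rw [norm_star]
  · exact fun x hx => cube_identity P hP x (hfix x hx)
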